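/- Finite-blocklength average-case converse (Theorem 3): Consider any zero-error coded caching scheme with demand-dependent delivery alphabets, i.e., positive integers N, K, F, a real M ≥ 0, messages W_1,…,W_N i.i.d. uniform on {1,…,2^F}, cache values V_k = g_k(W_1,…,W_N) for k ∈ {1,…,K} where each g_k maps into a set of size at most ⌊2^{F·M}⌋, for every demand vector d ∈ {1,…,N}^K a finite alphabet 𝒳_d, a delivery symbol X_d = f_d(W_1,…,W_N) ∈ 𝒳_d, and decoders φ_{k,d} with φ_{k,d}(X_d, V_k) = W_{d_k} for every realization of (W_1,…,W_N), every k, and every d. Then for every ℓ ∈ {1,…,K}: (1/N^K)·∑_{d ∈ {1,…,N}^K} log₂|𝒳_d| ≥ F·(1 − (1 − 1/N)^ℓ)·(N − ℓ·M) and (1/N^K)·∑_{d ∈ {1,…,N}^K} log₂|𝒳_d| ≥ F·[(1 − (1 − 1/N)^ℓ)·N − (ℓ(ℓ+1)/(2N))·M]. (Letting F → ∞ this yields the paper's asymptotic bound R*_avg(M) ≥ R^low_avg(M).) -/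

import Mathlib

open Classical in
/-- Size of the class of `a`. -/
noncomputable def ccN {Ω : Type} [Fintype Ω] (r : Setoid Ω) (a : Ω) : ℕ :=
  (Finset.univ.filter (fun b => r a b)).card

/-- Entropy (bits) of the partition `r` under the uniform distribution. -/
noncomputable def ccH {Ω : Type} [Fintype Ω] (r : Setoid Ω) : ℝ :=
  Real.logb 2 (Fintype.card Ω) - (∑ a, Real.logb 2 (ccN r a)) / Fintype.card Ω

section
variable {Ω : Type} [Fintype Ω]

lemma ccN_pos (r : Setoid Ω) (a : Ω) : 0 < ccN r a := by
  classical
  unfold ccN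
  refine Finset.card_pos.2 ⟨a, ?_⟩
  simp only [Finset.mem_filter, Finset.mem_univ, true_and]
  exact r.refl' a

lemma ccN_posR (r : Setoid Ω) (a : Ω) : (0 : ℝ) < ccN r a := by
  exact_mod_cast ccN_pos r a

lemma ccN_congr (r : Setoid Ω) {a b : Ω} (h : r a b) : ccN r a = ccN r b := by
  classical
  unfold ccN
  congr 1
  ext c
  simp only [Finset.mem_filter, Finset.mem_univ, true_and]
  exact ⟨fun hc => r.trans' (r.symm' h) hc, fun hc => r.trans' h hc⟩

lemma ccN_mono {r s : Setoid Ω} (h : r ≤ s) (a : Ω) : ccN r a ≤ ccN s a := by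
  classical
  unfold ccN
  apply Finset.card_le_card
  intro b
  simp only [Finset.mem_filter, Finset.mem_univ, true_and]
  exact fun hb => h hb

lemma ccH_anti {r s : Setoid Ω} (h : r ≤ s) : ccH s ≤ ccH r := by
  unfold ccH
  have : ∑ a, Real.logb 2 (ccN r a) ≤ ∑ a, Real.logb 2 (ccN s a) := by
    refine Finset.sum_le_sum fun a _ => ?_
    exact Real.logb_le_logb_of_le (by norm_num) (ccN_posR r a) (by exact_mod_cast ccN_mono h a)
  gcongr

/-- Weighted count in one class. -/
lemma cc_sum_class (r : Setoid Ω) (P : Ω → Prop) [DecidablePred P]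
    (hP : ∀ a b, P a → P b → r a b) :
    ∑ a, (if P a then (1 : ℝ) / ccN r a else 0) ≤ 1 := by
  classical
  by_cases h : ∃ a, P a
  · obtain ⟨a, ha⟩ := h
    have h1 : ∑ b, (if P b then (1 : ℝ) / ccN r b else 0)
        ≤ ∑ b, (if r a b then (1 : ℝ) / ccN r a else 0) := by
      refine Finset.sum_le_sum fun b _ => ?_
      by_cases hb : P b
      · have := hP a b ha hb
        rw [if_pos hb, if_pos this, ccN_congr r this]
      · rw [if_neg hb]
        split_ifs <;> positivity
    refine h1.trans (le_of_eq ?_)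
    rw [← Finset.sum_filter, Finset.sum_const, nsmul_eq_mul]
    have := ccN_posR r a
    change (ccN r a : ℝ) * (1 / ccN r a) = 1
    field_simp
  · push Not at h
    simp [h]

lemma ccH_sub [Nonempty Ω] {r s t : Setoid Ω} (hr : r ≤ t) (hs : s ≤ t) :
    ccH (r ⊓ s) + ccH t ≤ ccH r + ccH s := by
  classical
  have hΩ : (0 : ℝ) < Fintype.card Ω := by exact_mod_cast Fintype.card_pos
  -- the ratio sum
  have key : ∑ a, (ccN r a : ℝ) * ccN s a / (ccN (r ⊓ s) a * ccN t a) ≤ Fintype.card Ω := by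
    have e1 : ∀ a, (ccN r a : ℝ) * ccN s a / (ccN (r ⊓ s) a * ccN t a)
        = ∑ b, ∑ c, (if r a b ∧ s a c then (1 : ℝ) / (ccN (r ⊓ s) a * ccN t a) else 0) := by
      intro a
      have hr' : (ccN r a : ℝ) = ∑ b, if r a b then (1 : ℝ) else 0 := by
        simp [ccN]
      have hs' : (ccN s a : ℝ) = ∑ b, if s a b then (1 : ℝ) else 0 := by
        simp [ccN]
      rw [hr', hs', Finset.sum_mul_sum, Finset.sum_div]
      refine Finset.sum_congr rfl fun b _ => ?_
      rw [Finset.sum_div]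
      refine Finset.sum_congr rfl fun c _ => ?_
      by_cases h1 : r a b <;> by_cases h2 : s a c <;> simp [h1, h2]
    rw [Finset.sum_congr rfl fun a _ => e1 a, Finset.sum_comm]
    have e2 : ∀ b, ∑ a, ∑ c, (if r a b ∧ s a c then (1 : ℝ) / (ccN (r ⊓ s) a * ccN t a) else 0)
        ≤ 1 := by
      intro b
      rw [Finset.sum_comm]
      have e3 : ∀ c, ∑ a, (if r a b ∧ s a c then (1 : ℝ) / (ccN (r ⊓ s) a * ccN t a) else 0)
          ≤ if t b c then (1 : ℝ) / ccN t b else 0 := by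
        intro c
        by_cases htc : t b c
        · rw [if_pos htc]
          have h1 := cc_sum_class (r ⊓ s) (fun a => r a b ∧ s a c) (by
            rintro x y ⟨h1, h2⟩ ⟨h3, h4⟩
            exact ⟨r.trans' h1 (r.symm' h3), s.trans' h2 (s.symm' h4)⟩)
          have h2 : ∑ a, (if r a b ∧ s a c then (1 : ℝ) / (ccN (r ⊓ s) a * ccN t a) else 0)
              = (∑ a, (if r a b ∧ s a c then (1 : ℝ) / ccN (r ⊓ s) a else 0)) * (1 / ccN t b) := by
            rw [Finset.sum_mul]
            refine Finset.sum_congr rfl fun a _ => ?_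
            by_cases h : r a b ∧ s a c
            · rw [if_pos h, if_pos h, ccN_congr t (hr h.1)]
              rw [div_mul_div_comm, one_mul]
            · rw [if_neg h, if_neg h, zero_mul]
          rw [h2]
          have : (0 : ℝ) ≤ 1 / ccN t b := by positivity
          nlinarith
        · rw [if_neg htc]
          refine le_of_eq (Finset.sum_eq_zero fun a _ => ?_)
          rw [if_neg]
          rintro ⟨h1, h2⟩
          exact htc (t.trans' (t.symm' (hr h1)) (hs h2))
      refine (Finset.sum_le_sum fun c _ => e3 c).trans (le_of_eq ?_)
      rw [← Finset.sum_filter, Finset.sum_const, nsmul_eq_mul]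
      have := ccN_posR t b
      change (ccN t b : ℝ) * (1 / ccN t b) = 1
      field_simp
    refine (Finset.sum_le_sum fun b _ => e2 b).trans ?_
    simp
  have hl2 : 0 < Real.log 2 := Real.log_pos (by norm_num)
  have main : ∑ a, (Real.logb 2 (ccN r a) + Real.logb 2 (ccN s a)
      - Real.logb 2 (ccN (r ⊓ s) a) - Real.logb 2 (ccN t a)) ≤ 0 := by
    have : ∀ a, (Real.logb 2 (ccN r a) + Real.logb 2 (ccN s a)
      - Real.logb 2 (ccN (r ⊓ s) a) - Real.logb 2 (ccN t a)) ≤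
      ((ccN r a : ℝ) * ccN s a / (ccN (r ⊓ s) a * ccN t a) - 1) / Real.log 2 := by
      intro a
      have h1 := ccN_posR r a
      have h2 := ccN_posR s a
      have h3 := ccN_posR (r ⊓ s) a
      have h4 := ccN_posR t a
      have := Real.log_le_sub_one_of_pos
        (show 0 < (ccN r a : ℝ) * ccN s a / (ccN (r ⊓ s) a * ccN t a) by positivity)
      rw [Real.log_div (by positivity) (by positivity), Real.log_mul (by positivity) (by positivity),
        Real.log_mul (by positivity) (by positivity)] at this
      unfold Real.logb
      rw [← add_div, ← sub_div, ← sub_div]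
      apply div_le_div_of_nonneg_right _ hl2.le
      linarith
    refine (Finset.sum_le_sum fun a _ => this a).trans ?_
    rw [← Finset.sum_div, Finset.sum_sub_distrib]
    apply div_nonpos_of_nonpos_of_nonneg _ hl2.le
    simp only [Finset.sum_const, Finset.card_univ, nsmul_eq_mul, mul_one]
    linarith
  simp only [Finset.sum_sub_distrib, Finset.sum_add_distrib] at main
  unfold ccH
  have : ((∑ a, Real.logb 2 (ccN r a)) + (∑ a, Real.logb 2 (ccN s a)))/ Fintype.card Ω
      ≤ ((∑ a, Real.logb 2 (ccN (r ⊓ s) a)) + (∑ a, Real.logb 2 (ccN t a)))/ Fintype.card Ω := by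
    apply div_le_div_of_nonneg_right _ hΩ.le
    linarith
  rw [add_div, add_div] at this
  linarith

lemma ccH_top : ccH (⊤ : Setoid Ω) = 0 := by
  classical
  have : ∀ a, ccN (⊤ : Setoid Ω) a = Fintype.card Ω := by
    intro a
    unfold ccN
    rw [Finset.filter_true_of_mem, Finset.card_univ]
    intro b _
    trivial
  unfold ccH
  simp only [this, Finset.sum_const, Finset.card_univ, nsmul_eq_mul]
  by_cases h : (Fintype.card Ω : ℝ) = 0
  · simp [h]
  · field_simp
    ring

lemma ccH_inf_le [Nonempty Ω] (r s : Setoid Ω) : ccH (r ⊓ s) ≤ ccH r + ccH s := by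
  have := ccH_sub (r := r) (s := s) (t := ⊤) le_top le_top
  rw [ccH_top] at this
  linarith

lemma ccH_ker_le [Nonempty Ω] {V : Type} [Fintype V] (g : Ω → V) :
    ccH (Setoid.ker g) ≤ Real.logb 2 (Fintype.card V) := by
  classical
  have hΩ : (0 : ℝ) < Fintype.card Ω := by exact_mod_cast Fintype.card_pos
  have : Nonempty V := ⟨g (Classical.arbitrary Ω)⟩
  have hV : (0 : ℝ) < Fintype.card V := by exact_mod_cast Fintype.card_pos
  have hl2 : 0 < Real.log 2 := Real.log_pos (by norm_num)
  have key : ∑ a, (1 : ℝ) / ccN (Setoid.ker g) a ≤ Fintype.card V := by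
    have e : ∀ a, (1 : ℝ) / ccN (Setoid.ker g) a
        = ∑ v, if g a = v then (1 : ℝ) / ccN (Setoid.ker g) a else 0 := by
      intro a; simp
    rw [Finset.sum_congr rfl fun a _ => e a, Finset.sum_comm]
    have : ∀ v, ∑ a, (if g a = v then (1 : ℝ) / ccN (Setoid.ker g) a else 0) ≤ 1 := by
      intro v
      apply cc_sum_class (Setoid.ker g) (fun a => g a = v)
      intro a b h1 h2
      exact h1.trans h2.symm
    refine (Finset.sum_le_sum fun v _ => this v).trans ?_
    simp
  have main : ∑ a, (Real.logb 2 (Fintype.card Ω) - Real.logb 2 (Fintype.card V)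
      - Real.logb 2 (ccN (Setoid.ker g) a)) ≤ 0 := by
    have : ∀ a, (Real.logb 2 (Fintype.card Ω) - Real.logb 2 (Fintype.card V)
      - Real.logb 2 (ccN (Setoid.ker g) a)) ≤
      ((Fintype.card Ω : ℝ) / Fintype.card V * (1 / ccN (Setoid.ker g) a) - 1) / Real.log 2 := by
      intro a
      have h3 := ccN_posR (Setoid.ker g) a
      have := Real.log_le_sub_one_of_pos
        (show 0 < (Fintype.card Ω : ℝ) / Fintype.card V / (ccN (Setoid.ker g) a) by positivity)
      rw [Real.log_div (by positivity) (by positivity),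
        Real.log_div (by positivity) (by positivity)] at this
      unfold Real.logb
      rw [← sub_div, ← sub_div]
      apply div_le_div_of_nonneg_right _ hl2.le
      rw [mul_one_div]
      exact this
    refine (Finset.sum_le_sum fun a _ => this a).trans ?_
    rw [← Finset.sum_div, Finset.sum_sub_distrib, ← Finset.mul_sum]
    apply div_nonpos_of_nonpos_of_nonneg _ hl2.le
    simp only [Finset.sum_const, Finset.card_univ, nsmul_eq_mul, mul_one]
    have : (Fintype.card Ω : ℝ) / Fintype.card V * ∑ a, (1 : ℝ) / ccN (Setoid.ker g) a
        ≤ (Fintype.card Ω : ℝ) / Fintype.card V * Fintype.card V := by gcongr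
    rw [div_mul_cancel₀ _ hV.ne'] at this
    linarith
  rw [Finset.sum_sub_distrib] at main
  simp only [Finset.sum_const, Finset.card_univ, nsmul_eq_mul] at main
  unfold ccH
  rw [sub_le_iff_le_add, ← sub_le_iff_le_add', le_div_iff₀ hΩ]
  linarith
end

section
variable {N K F : ℕ} {V : Fin K → Type} (g : ∀ k : Fin K, (Fin N → Fin (2 ^ F)) → V k)

/-- Joint partition of the messages in `S` and the first `j` caches. -/
def ccR (S : Finset (Fin N)) (j : ℕ) : Setoid (Fin N → Fin (2 ^ F)) where
  r a b := (∀ i ∈ S, a i = b i) ∧ ∀ k : Fin K, k.val < j → g k a = g k b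
  iseqv := ⟨fun _ => ⟨fun _ _ => rfl, fun _ _ => rfl⟩,
    fun h => ⟨fun i hi => (h.1 i hi).symm, fun k hk => (h.2 k hk).symm⟩,
    fun h h' => ⟨fun i hi => (h.1 i hi).trans (h'.1 i hi),
      fun k hk => (h.2 k hk).trans (h'.2 k hk)⟩⟩

instance ccNE : Nonempty (Fin N → Fin (2 ^ F)) := ⟨fun _ => ⟨0, by positivity⟩⟩

lemma ccR_zero (S : Finset (Fin N)) : ccH (ccR g S 0) = S.card * F := by
  classical
  have hn : ∀ a, ccN (ccR g S 0) a = (2 ^ F) ^ (N - S.card) := by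
    intro a
    have : (Finset.univ.filter (fun b => (ccR g S 0) a b))
        = Fintype.piFinset (fun i => if i ∈ S then {a i} else Finset.univ) := by
      ext b
      simp only [Finset.mem_filter, Finset.mem_univ, true_and, Fintype.mem_piFinset]
      constructor
      · intro h i
        by_cases hi : i ∈ S
        · simp [hi, h.1 i hi]
        · simp [hi]
      · intro h
        refine ⟨fun i hi => ?_, fun k hk => absurd hk (by omega)⟩
        have := h i
        simp only [hi, if_true, Finset.mem_singleton] at this
        exact this.symm
    unfold ccN
    rw [this, Fintype.card_piFinset]
    have h2 : ∀ i, (if i ∈ S then ({a i} : Finset (Fin (2 ^ F))) else Finset.univ).card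
        = if i ∈ S then 1 else 2 ^ F := by
      intro i; split_ifs <;> simp
    rw [Finset.prod_congr rfl fun i _ => h2 i, Finset.prod_ite]
    simp only [Finset.prod_const_one, Finset.prod_const, one_mul]
    congr 1
    rw [Finset.filter_not, Finset.card_sdiff_of_subset (Finset.filter_subset _ _)]
    simp
  have hS : S.card ≤ N := by simpa using Finset.card_le_univ S
  unfold ccH
  simp only [hn, Finset.sum_const, Finset.card_univ, nsmul_eq_mul]
  have hΩ : (0 : ℝ) < Fintype.card (Fin N → Fin (2 ^ F)) := by exact_mod_cast Fintype.card_pos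
  rw [mul_div_cancel_left₀ _ hΩ.ne']
  simp only [Fintype.card_fun, Fintype.card_fin]
  push_cast [hS]
  rw [← pow_mul, ← pow_mul, Real.logb_pow, Real.logb_pow, Real.logb_self_eq_one (by norm_num)]
  push_cast [hS]
  ring

lemma ccR_anti {S T : Finset (Fin N)} (h : S ⊆ T) {i j : ℕ} (hij : i ≤ j) :
    ccR g T j ≤ ccR g S i := by
  intro a b hab
  exact ⟨fun i hi => hab.1 i (h hi), fun k hk => hab.2 k (by omega)⟩

lemma ccR_step {C : ℝ} [∀ k, Fintype (V k)]
    (hC : ∀ k, Real.logb 2 (Fintype.card (V k)) ≤ C) (S : Finset (Fin N)) (j : ℕ) (hj : j ≤ K) :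
    ccH (ccR g S j) ≤ S.card * F + j * C := by
  induction j with
  | zero => rw [ccR_zero]; simp
  | succ j ih =>
    have h1 : ccR g S j ⊓ Setoid.ker (g ⟨j, hj⟩) ≤ ccR g S (j + 1) := by
      rintro a b ⟨h1, h2⟩
      refine ⟨h1.1, fun k hk => ?_⟩
      by_cases hkj : k.val < j
      · exact h1.2 k hkj
      · have : k = ⟨j, hj⟩ := Fin.ext (by simp; omega)
        subst this
        exact h2
    have h2 := ccH_anti h1
    have h3 := ccH_inf_le (ccR g S j) (Setoid.ker (g ⟨j, hj⟩))
    have h4 := ccH_ker_le (g ⟨j, hj⟩)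
    have h5 := ih (by omega)
    have h6 := hC ⟨j, hj⟩
    push_cast
    linarith

lemma ccR_univ (j : ℕ) : (N : ℝ) * F ≤ ccH (ccR g (Finset.univ : Finset (Fin N)) j) := by
  have h := ccR_zero g (Finset.univ : Finset (Fin N))
  have := ccH_anti (ccR_anti g (Finset.Subset.refl (Finset.univ : Finset (Fin N))) (Nat.zero_le j))
  rw [h] at this
  simpa using this

lemma ccR_sum (S T : Finset (Fin N)) (j : ℕ) :
    ccH (ccR g (S ∪ T) j) - ccH (ccR g S j)
      ≤ ∑ n ∈ T, (ccH (ccR g (insert n S) j) - ccH (ccR g S j)) := by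
  classical
  induction T using Finset.induction_on with
  | empty => simp
  | insert n T hn ih =>
    rw [Finset.sum_insert hn]
    have h := ccH_sub (r := ccR g (S ∪ T) j) (s := ccR g (insert n S) j) (t := ccR g S j)
      (ccR_anti g Finset.subset_union_left le_rfl) (ccR_anti g (Finset.subset_insert _ _) le_rfl)
    have h2 : ccR g (S ∪ T) j ⊓ ccR g (insert n S) j ≤ ccR g (S ∪ insert n T) j := by
      rintro a b ⟨h1, h2⟩
      refine ⟨fun i hi => ?_, h1.2⟩
      simp only [Finset.mem_union, Finset.mem_insert] at hi
      rcases hi with hi | hi | hi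
      · exact h1.1 i (by simp [hi])
      · exact h2.1 i (by simp [hi])
      · exact h1.1 i (by simp [hi])
    have := ccH_anti h2
    linarith

/-- The set of the first `j` demands. -/
def ccS (j : ℕ) (d : Fin K → Fin N) : Finset (Fin N) :=
  (Finset.univ.filter (fun k : Fin K => k.val < j)).image d

lemma ccS_zero (d : Fin K → Fin N) : ccS 0 d = ∅ := by simp [ccS]

lemma ccS_succ (j : ℕ) (hj : j < K) (d : Fin K → Fin N) :
    ccS (j + 1) d = insert (d ⟨j, hj⟩) (ccS j d) := by
  ext n
  simp only [ccS, Finset.mem_image, Finset.mem_filter, Finset.mem_univ, true_and,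
    Finset.mem_insert]
  constructor
  · rintro ⟨k, hk, rfl⟩
    by_cases hkj : k.val < j
    · exact Or.inr ⟨k, hkj, rfl⟩
    · left
      congr 1
      exact Fin.ext (by simp; omega)
  · rintro (rfl | ⟨k, hk, rfl⟩)
    · exact ⟨_, by simp, rfl⟩
    · exact ⟨k, by omega, rfl⟩

lemma ccS_update (j : ℕ) (hj : j < K) (d : Fin K → Fin N) (n : Fin N) :
    ccS j (Function.update d ⟨j, hj⟩ n) = ccS j d := by
  unfold ccS
  apply Finset.image_congr
  intro k hk
  simp only [Finset.coe_filter, Finset.mem_univ, true_and, Set.mem_ofPred_eq] at hk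
  apply Function.update_of_ne
  rintro rfl
  simp at hk

lemma cc_avg (j : ℕ) (hj : j < K) (A : Finset (Fin N) → Fin N → ℝ) :
    (N : ℝ) * ∑ d : Fin K → Fin N, A (ccS j d) (d ⟨j, hj⟩)
      = ∑ d : Fin K → Fin N, ∑ n, A (ccS j d) n := by
  have h : ∑ p : (Fin K → Fin N) × Fin N, A (ccS j p.1) p.2
      = ∑ p : (Fin K → Fin N) × Fin N, A (ccS j p.1) (p.1 ⟨j, hj⟩) := by
    refine Fintype.sum_equiv
      (Function.Involutive.toPerm
        (fun p : (Fin K → Fin N) × Fin N => (Function.update p.1 ⟨j, hj⟩ p.2, p.1 ⟨j, hj⟩)) ?_)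
      _ _ ?_
    · rintro ⟨d, n⟩
      simp
    · rintro ⟨d, n⟩
      change A (ccS j d) n = A (ccS j (Function.update d ⟨j, hj⟩ n))
        (Function.update d ⟨j, hj⟩ n ⟨j, hj⟩)
      rw [ccS_update, Function.update_self]
  rw [Fintype.sum_prod_type, Fintype.sum_prod_type] at h
  rw [h, Finset.mul_sum]
  simp

lemma cc_card (hN : 0 < N) (j : ℕ) (hj : j ≤ K) :
    ∑ d : Fin K → Fin N, ((N : ℝ) - (ccS j d).card)
      = (N : ℝ) ^ K * (N * (1 - 1 / (N : ℝ)) ^ j) := by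
  have hN' : (0 : ℝ) < N := by exact_mod_cast hN
  induction j with
  | zero => simp [ccS_zero]
  | succ j ih =>
    have ih := ih (by omega)
    have h := cc_avg (N := N) (K := K) j hj (fun S n => (N : ℝ) - (insert n S).card)
    have h2 : ∀ S : Finset (Fin N), ∑ n, ((N : ℝ) - (insert n S).card)
        = (N - 1) * ((N : ℝ) - S.card) := by
      intro S
      have h3 : ∀ n, ((N : ℝ) - (insert n S).card) = (N - S.card - 1) + if n ∈ S then 1 else 0 := by
        intro n
        by_cases hn : n ∈ S
        · simp [hn]
        · rw [Finset.card_insert_of_notMem hn]; simp [hn]; ring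
      rw [Finset.sum_congr rfl fun n _ => h3 n, Finset.sum_add_distrib]
      simp
      ring
    simp only [h2] at h
    rw [← Finset.mul_sum, ih] at h
    simp only [ccS_succ j hj]
    apply mul_left_cancel₀ hN'.ne'
    rw [h, pow_succ]
    generalize (1 - 1 / (N : ℝ)) ^ j = y
    field_simp

variable {X : Type} [Fintype X]

/-- Chain bound for one demand. -/
lemma cc_chain (x : (Fin N → Fin (2 ^ F)) → X) (d : Fin K → Fin N)
    (φ : ∀ k : Fin K, X → V k → Fin (2 ^ F)) (hdec : ∀ w k, φ k (x w) (g k w) = w (d k))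
    (l : ℕ) (hl : l ≤ K) :
    ∑ j ∈ Finset.range l, (ccH (ccR g (ccS (j + 1) d) (j + 1)) - ccH (ccR g (ccS j d) (j + 1)))
      + (ccH (Setoid.ker x ⊓ ccR g (ccS l d) l) - ccH (ccR g (ccS l d) l))
      ≤ Real.logb 2 (Fintype.card X) := by
  induction l with
  | zero =>
    have h1 := ccH_inf_le (Setoid.ker x) (ccR g (ccS 0 d) 0)
    have h2 := ccH_ker_le x
    simp only [Finset.range_zero, Finset.sum_empty]
    linarith
  | succ l ih =>
    have ih := ih (by omega)
    rw [Finset.sum_range_succ]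
    have h1 := ccH_sub (r := Setoid.ker x ⊓ ccR g (ccS l d) l) (s := ccR g (ccS l d) (l + 1))
      (t := ccR g (ccS l d) l) inf_le_right (ccR_anti g (Finset.Subset.refl _) (by omega))
    have h2 : (Setoid.ker x ⊓ ccR g (ccS l d) l) ⊓ ccR g (ccS l d) (l + 1)
        ≤ Setoid.ker x ⊓ ccR g (ccS (l + 1) d) (l + 1) := by
      rintro a b ⟨⟨h1, h2⟩, h3⟩
      refine ⟨h1, fun i hi => ?_, h3.2⟩
      rw [ccS_succ l hl, Finset.mem_insert] at hi
      rcases hi with rfl | hi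
      · rw [← hdec a, ← hdec b, h3.2 ⟨l, hl⟩ (by simp), show x a = x b from h1]
      · exact h2.1 i hi
    have h3 := ccH_anti h2
    linarith

lemma cc_direct (x : (Fin N → Fin (2 ^ F)) → X) (d : Fin K → Fin N)
    (φ : ∀ k : Fin K, X → V k → Fin (2 ^ F)) (hdec : ∀ w k, φ k (x w) (g k w) = w (d k))
    (l : ℕ) :
    ccH (ccR g (ccS l d) l) - ccH (ccR g ∅ l) ≤ Real.logb 2 (Fintype.card X) := by
  have h1 := ccH_inf_le (Setoid.ker x) (ccR g ∅ l)
  have h2 := ccH_ker_le x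
  have h3 : Setoid.ker x ⊓ ccR g ∅ l ≤ ccR g (ccS l d) l := by
    rintro a b ⟨h1, h2⟩
    refine ⟨fun i hi => ?_, h2.2⟩
    simp only [ccS, Finset.mem_image, Finset.mem_filter, Finset.mem_univ, true_and] at hi
    obtain ⟨k, hk, rfl⟩ := hi
    rw [← hdec a, ← hdec b, h2.2 k hk, show x a = x b from h1]
  have h4 := ccH_anti h3
  linarith

lemma cc_rec (hN : 0 < N) (m j : ℕ) (hj : j ≤ K) :
    (N : ℝ) ^ K * ((1 - (1 - 1 / (N : ℝ)) ^ j) * (ccH (ccR g Finset.univ m) - ccH (ccR g ∅ m)))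
      ≤ ∑ d : Fin K → Fin N, (ccH (ccR g (ccS j d) m) - ccH (ccR g ∅ m)) := by
  have hN' : (0 : ℝ) < N := by exact_mod_cast hN
  have hN1 : (1 : ℝ) ≤ N := by exact_mod_cast hN
  induction j with
  | zero => simp [ccS_zero]
  | succ j ih =>
    have ih := ih (by omega)
    have h := cc_avg (K := K) j hj (fun S n => ccH (ccR g (insert n S) m) - ccH (ccR g ∅ m))
    have h2 : ∀ S : Finset (Fin N),
        (N - 1) * (ccH (ccR g S m) - ccH (ccR g ∅ m)) +
          (ccH (ccR g Finset.univ m) - ccH (ccR g ∅ m))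
        ≤ ∑ n, (ccH (ccR g (insert n S) m) - ccH (ccR g ∅ m)) := by
      intro S
      have := ccR_sum g S Finset.univ m
      rw [show S ∪ Finset.univ = Finset.univ by ext; simp, Finset.sum_sub_distrib] at this
      rw [Finset.sum_sub_distrib]
      simp only [Finset.sum_const, Finset.card_univ, Fintype.card_fin, nsmul_eq_mul] at this ⊢
      linarith
    have h3 := Finset.sum_le_sum fun (d : Fin K → Fin N) (_ : d ∈ Finset.univ) => h2 (ccS j d)
    rw [← h, Finset.sum_add_distrib, ← Finset.mul_sum] at h3
    simp only [← ccS_succ j hj] at h3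
    simp only [Finset.sum_const, Finset.card_univ, Fintype.card_fun, Fintype.card_fin,
      nsmul_eq_mul, Nat.cast_pow] at h3
    have h4 := mul_le_mul_of_nonneg_left ih (sub_nonneg.2 hN1)
    refine le_of_mul_le_mul_left (le_trans (le_of_eq ?_) (le_trans (add_le_add h4 le_rfl) h3)) hN'
    rw [pow_succ]
    generalize (1 - 1 / (N : ℝ)) ^ j = y
    field_simp
    ring

lemma cc_term {C : ℝ} [∀ k, Fintype (V k)]
    (hC : ∀ k, Real.logb 2 (Fintype.card (V k)) ≤ C) (hN : 0 < N) (j : ℕ) (hj : j < K) :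
    (N : ℝ) ^ K * (F * (1 - 1 / (N : ℝ)) ^ j - (j + 1) * C / N)
      ≤ ∑ d : Fin K → Fin N,
        (ccH (ccR g (ccS (j + 1) d) (j + 1)) - ccH (ccR g (ccS j d) (j + 1))) := by
  have hN' : (0 : ℝ) < N := by exact_mod_cast hN
  have h := cc_avg (K := K) j hj
    (fun S n => ccH (ccR g (insert n S) (j + 1)) - ccH (ccR g S (j + 1)))
  have h2 : ∀ S : Finset (Fin N), F * ((N : ℝ) - S.card) - (j + 1) * C
      ≤ ∑ n, (ccH (ccR g (insert n S) (j + 1)) - ccH (ccR g S (j + 1))) := by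
    intro S
    have h1 := ccR_sum g S Finset.univ (j + 1)
    rw [show S ∪ Finset.univ = Finset.univ by ext; simp] at h1
    have h2 := ccR_univ g (j + 1)
    have h3 := ccR_step g hC S (j + 1) hj
    push_cast at h3
    linarith
  have h3 := Finset.sum_le_sum fun (d : Fin K → Fin N) (_ : d ∈ Finset.univ) => h2 (ccS j d)
  rw [← h, Finset.sum_sub_distrib, ← Finset.mul_sum, cc_card hN j hj.le] at h3
  simp only [← ccS_succ j hj] at h3
  simp only [Finset.sum_const, Finset.card_univ, Fintype.card_fun, Fintype.card_fin,
      nsmul_eq_mul, Nat.cast_pow] at h3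
  refine le_of_mul_le_mul_left (le_trans (le_of_eq ?_) h3) hN'
  generalize (1 - 1 / (N : ℝ)) ^ j = y
  field_simp

lemma cc_geom (hN : 0 < N) (C : ℝ) (l : ℕ) :
    ∑ j ∈ Finset.range l, ((F : ℝ) * (1 - 1 / (N : ℝ)) ^ j - (j + 1) * C / N)
      = F * ((1 - (1 - 1 / (N : ℝ)) ^ l) * N) - l * (l + 1) / (2 * N) * C := by
  have hN' : (0 : ℝ) < N := by exact_mod_cast hN
  induction l with
  | zero => simp
  | succ l ih =>
    rw [Finset.sum_range_succ, ih, pow_succ]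
    generalize (1 - 1 / (N : ℝ)) ^ l = y
    push_cast
    field_simp
    ring
end

/-- **Finite-blocklength average-case converse (Theorem 3).**
For any zero-error coded caching scheme with demand-dependent delivery alphabets `𝒳_d`,
for every `ℓ ∈ {1,…,K}`:
`(1/N^K)·∑_d log₂|𝒳_d| ≥ F·(1 − (1 − 1/N)^ℓ)·(N − ℓM)` and
`(1/N^K)·∑_d log₂|𝒳_d| ≥ F·[(1 − (1 − 1/N)^ℓ)·N − (ℓ(ℓ+1)/(2N))·M]`. -/
theorem average_case_converse
    (N K F : ℕ) (hN : 0 < N) (hK : 0 < K) (hF : 0 < F)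
    (M : ℝ) (hM : 0 ≤ M)
    (V : Fin K → Type) [∀ k, Fintype (V k)]
    (hV : ∀ k, Fintype.card (V k) ≤ ⌊(2 : ℝ) ^ ((F : ℝ) * M)⌋₊)
    (𝒳 : (Fin K → Fin N) → Type) [∀ d, Fintype (𝒳 d)]
    (g : ∀ k : Fin K, (Fin N → Fin (2 ^ F)) → V k)
    (f : ∀ d : Fin K → Fin N, (Fin N → Fin (2 ^ F)) → 𝒳 d)
    (φ : ∀ (k : Fin K) (d : Fin K → Fin N), 𝒳 d → V k → Fin (2 ^ F))
    (hdec : ∀ (w : Fin N → Fin (2 ^ F)) (k : Fin K) (d : Fin K → Fin N),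
      φ k d (f d w) (g k w) = w (d k))
    (ℓ : ℕ) (hℓ1 : 1 ≤ ℓ) (hℓ2 : ℓ ≤ K) :
    (F : ℝ) * ((1 - (1 - 1 / (N : ℝ)) ^ ℓ) * ((N : ℝ) - (ℓ : ℝ) * M))
      ≤ (1 / (N : ℝ) ^ K) * ∑ d : Fin K → Fin N, Real.logb 2 (Fintype.card (𝒳 d))
    ∧ (F : ℝ) * ((1 - (1 - 1 / (N : ℝ)) ^ ℓ) * (N : ℝ)
          - ((ℓ : ℝ) * ((ℓ : ℝ) + 1) / (2 * (N : ℝ))) * M)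
      ≤ (1 / (N : ℝ) ^ K) * ∑ d : Fin K → Fin N, Real.logb 2 (Fintype.card (𝒳 d)) := by
  have hN' : (0 : ℝ) < N := by exact_mod_cast hN
  have hN1 : (1 : ℝ) ≤ N := by exact_mod_cast hN
  have hNK : (0 : ℝ) < (N : ℝ) ^ K := by positivity
  have hC : ∀ k, Real.logb 2 (Fintype.card (V k)) ≤ F * M := by
    intro k
    have : Nonempty (V k) := ⟨g k (fun _ => ⟨0, by positivity⟩)⟩
    have h0 : (0 : ℝ) < Fintype.card (V k) := by exact_mod_cast Fintype.card_pos
    rw [Real.logb_le_iff_le_rpow (by norm_num) h0]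
    exact (Nat.cast_le.2 (hV k)).trans (Nat.floor_le (by positivity))
  rw [one_div_mul_eq_div, le_div_iff₀' hNK, le_div_iff₀' hNK]
  constructor
  · have h1 := Finset.sum_le_sum fun (d : Fin K → Fin N) (_ : d ∈ Finset.univ) =>
      cc_direct g (f d) d (fun k => φ k d) (fun w k => hdec w k d) ℓ
    refine le_trans ?_ ((cc_rec g hN ℓ ℓ hℓ2).trans h1)
    apply mul_le_mul_of_nonneg_left _ hNK.le
    have h2 := ccR_univ g ℓ
    have h3 := ccR_step g hC ∅ ℓ hℓ2
    simp only [Finset.card_empty, Nat.cast_zero, zero_mul, zero_add] at h3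
    rw [mul_left_comm]
    apply mul_le_mul_of_nonneg_left
    · linarith
    · have h4 : 1 / (N : ℝ) ≤ 1 := by rw [div_le_one hN']; exact hN1
      have h5 : 0 ≤ 1 / (N : ℝ) := by positivity
      have := pow_le_one₀ (n := ℓ) (sub_nonneg.2 h4) (by linarith)
      linarith
  · have h1 := Finset.sum_le_sum fun (d : Fin K → Fin N) (_ : d ∈ Finset.univ) =>
      cc_chain g (f d) d (fun k => φ k d) (fun w k => hdec w k d) ℓ hℓ2
    refine le_trans ?_ h1
    rw [Finset.sum_add_distrib, Finset.sum_comm]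
    have h2 : 0 ≤ ∑ d : Fin K → Fin N,
        (ccH (Setoid.ker (f d) ⊓ ccR g (ccS ℓ d) ℓ) - ccH (ccR g (ccS ℓ d) ℓ)) :=
      Finset.sum_nonneg fun d _ => sub_nonneg.2 (ccH_anti inf_le_right)
    have h3 := Finset.sum_le_sum fun j (hj : j ∈ Finset.range ℓ) =>
      cc_term g hC hN j (lt_of_lt_of_le (Finset.mem_range.1 hj) hℓ2)
    rw [← Finset.mul_sum, cc_geom hN] at h3
    refine le_trans (le_of_eq ?_) (h3.trans (le_add_of_nonneg_right h2))
    ring
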